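/- arXiv:2309.04327 — 6 statements merged into one kernel-verified Lean document; each statement's English description precedes it below -/
import Mathlib

section
/- Let S be a finite set of points in a metric space, let k ≥ 1, and let C ⊆ S with |C| ≤ k be a set that center-covers S with radius r (a k-center solution of radius r). If M is a set of points containing, for each c ∈ C, at least one point m with d(m,c) ≤ r (one point from each cluster), then there exists a subset M' ⊆ M with |M'| ≤ k that center-covers S with radius 2r. -/
/-- `C` center-covers `S` with radius `r`: every point of `S` is within
distance at most `r` of some point of `C`. -/
def CenterCovers {X : Type*} [MetricSpace X] (C S : Finset X) (r : ℝ) : Prop :=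
  ∀ p ∈ S, ∃ c ∈ C, dist p c ≤ r

/-- If `C ⊆ S`, `|C| ≤ k`, center-covers `S` with radius `r`, and `M` contains
one point within distance `r` of each center of `C`, then some `M' ⊆ M` with
`|M'| ≤ k` center-covers `S` with radius `2r`. -/
theorem one_point_per_cluster_gives_2r
    {X : Type*} [MetricSpace X] (S C M : Finset X) (k : ℕ) (r : ℝ)
    (hk : 1 ≤ k) (hCS : C ⊆ S) (hCcard : C.card ≤ k)
    (hcov : CenterCovers C S r)
    (hM : ∀ c ∈ C, ∃ m ∈ M, dist m c ≤ r) :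
    ∃ M' ⊆ M, M'.card ≤ k ∧ CenterCovers M' S (2 * r) := by
  classical
  choose! f hf using hM
  refine ⟨C.image f, ?_, Finset.card_image_le.trans hCcard, ?_⟩
  · intro x hx
    obtain ⟨c, hc, rfl⟩ := Finset.mem_image.1 hx
    exact (hf c hc).1
  · intro p hp
    obtain ⟨c, hc, hpc⟩ := hcov p hp
    refine ⟨f c, Finset.mem_image_of_mem f hc, ?_⟩
    have h1 := dist_triangle p c (f c)
    have h2 := (hf c hc).2
    rw [dist_comm] at h2
    linarith
end

section
/- Let S be a finite set of points in a metric space, k ≥ 1, and suppose some set C ⊆ S with |C| ≤ k center-covers S with radius r. Then every subset C' ⊆ S that is maximal with respect to the property that all pairwise distances between distinct points of C' exceed 2r satisfies |C'| ≤ k, and C' center-covers S with radius 2r. In particular, C' is a 2-approximate k-center solution for S. -/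
/-- If some `C ⊆ S` with `|C| ≤ k` center-covers `S` with radius `r`, then every
`C' ⊆ S` maximal with respect to all pairwise distances between distinct points
exceeding `2r` satisfies `|C'| ≤ k` and center-covers `S` with radius `2r`,
i.e. it is a 2-approximate k-center solution. -/
theorem maximal_independent_is_2approx
    {X : Type*} [MetricSpace X] (S C C' : Finset X) (k : ℕ) (r : ℝ)
    (hk : 1 ≤ k) (hCS : C ⊆ S) (hCcard : C.card ≤ k)
    (hcov : CenterCovers C S r)
    (hC'S : C' ⊆ S)
    (hind : ∀ p ∈ C', ∀ q ∈ C', p ≠ q → 2 * r < dist p q)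
    (hmax : ∀ x ∈ S, x ∉ C' → ∃ c ∈ C', dist x c ≤ 2 * r) :
    C'.card ≤ k ∧ CenterCovers C' S (2 * r) := by
  constructor
  · refine le_trans ?_ hCcard
    choose! f hf hd using hcov
    refine Finset.card_le_card_of_injOn f (fun p hp => hf p (hC'S hp)) ?_
    intro p hp q hq hpq
    by_contra hne
    have h1 := hind p hp q hq hne
    have h2 := hd p (hC'S hp)
    have h3 := hd q (hC'S hq)
    rw [← hpq] at h3
    have h4 := dist_triangle_right p q (f p)
    linarith
  · intro p hp
    by_cases h : p ∈ C'
    · obtain ⟨c, _, hc⟩ := hcov p hp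
      refine ⟨p, h, ?_⟩
      have := dist_nonneg (x := p) (y := c)
      rw [dist_self]
      linarith
    · exact hmax p hp h
end

section
/- Let S be a finite nonempty set of points in a metric space, k ≥ 1, and let T ⊆ S be nonempty. Then the optimal k-center radius of T satisfies r*(T,k) ≤ 2·r*(S,k). -/
/-- `r` is the optimal k-center radius of `S`: it is achieved by some nonempty
set of at most `k` centers from `S`, and is at most any achievable radius. -/
def IsOptRadius {X : Type*} [MetricSpace X] (S : Finset X) (k : ℕ) (r : ℝ) : Prop :=
  (∃ C ⊆ S, C.Nonempty ∧ C.card ≤ k ∧ CenterCovers C S r) ∧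
  (∀ C ⊆ S, C.Nonempty → C.card ≤ k → ∀ r' : ℝ, CenterCovers C S r' → r ≤ r')

/-- For a nonempty subset `T ⊆ S`, the optimal k-center radius of `T` (with
centers required to lie in `T`) is at most twice that of `S`. -/
theorem opt_radius_subset_le_two_mul
    {X : Type*} [MetricSpace X] (S T : Finset X) (k : ℕ) (hk : 1 ≤ k)
    (hTS : T ⊆ S) (hT : T.Nonempty) (hS : S.Nonempty)
    (rS rT : ℝ) (hS' : IsOptRadius S k rS) (hT' : IsOptRadius T k rT) :
    rT ≤ 2 * rS := by
  classical
  obtain ⟨⟨C, _, hCne, hCk, hC⟩, _⟩ := hS'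
  obtain ⟨t0, ht0⟩ := hT
  have key : ∀ c : X, ∃ t ∈ T, ∀ p ∈ T, dist p c ≤ rS → dist t c ≤ rS := by
    intro c
    by_cases h : ∃ t ∈ T, dist t c ≤ rS
    · obtain ⟨t, ht, htc⟩ := h
      exact ⟨t, ht, fun _ _ _ => htc⟩
    · exact ⟨t0, ht0, fun p hp hpc => absurd ⟨p, hp, hpc⟩ h⟩
  choose f hfT hf using key
  refine hT'.2 (C.image f) ?_ (hCne.image f) (Finset.card_image_le.trans hCk) _ ?_
  · intro x hx
    obtain ⟨c, _, rfl⟩ := Finset.mem_image.1 hx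
    exact hfT c
  · intro p hp
    obtain ⟨c, hc, hpc⟩ := hC p (hTS hp)
    refine ⟨f c, Finset.mem_image_of_mem f hc, ?_⟩
    have h1 := hf c p hp hpc
    have h2 := dist_triangle_right p (f c) c
    linarith
end

section
/- Let T be a finite set of points in a metric space equipped with a linear order <, and let ρ ≥ 0. Suppose X ⊆ T satisfies: (i) all pairwise distances between distinct points of X exceed ρ; (ii) X center-covers T with radius ρ; and (iii) every element of X is <-smaller than every element of T \ X. Then X is the (unique) greedy set for (T,<,ρ). In particular, running the order-respecting greedy procedure on T recovers exactly the solution X. -/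
/-- `M` is a greedy set for `(T, <, ρ)`: `M ⊆ T` and for every `t ∈ T`,
`t ∈ M` iff every `s ∈ M` with `s < t` satisfies `dist s t > ρ`. -/
def IsGreedySet {X : Type*} [MetricSpace X] [LinearOrder X]
    (T M : Finset X) (ρ : ℝ) : Prop :=
  M ⊆ T ∧ ∀ t ∈ T, (t ∈ M ↔ ∀ s ∈ M, s < t → ρ < dist s t)

/-- If `Y ⊆ T` is independent at radius `ρ`, center-covers `T` with radius `ρ`,
and every element of `Y` precedes every element of `T \ Y` in the order, then
`Y` is the (unique) greedy set for `(T, <, ρ)`: the order-respecting greedy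
procedure on `T` recovers exactly `Y`. -/
theorem greedy_recovers_prefix_solution
    {X : Type*} [MetricSpace X] [LinearOrder X]
    (T Y : Finset X) (ρ : ℝ) (hρ : 0 ≤ ρ)
    (hYT : Y ⊆ T)
    (hind : ∀ p ∈ Y, ∀ q ∈ Y, p ≠ q → ρ < dist p q)
    (hcov : CenterCovers Y T ρ)
    (hprefix : ∀ y ∈ Y, ∀ t ∈ T, t ∉ Y → y < t) :
    IsGreedySet T Y ρ ∧ ∀ M : Finset X, IsGreedySet T M ρ → M = Y := by
  constructor
  · refine ⟨hYT, fun t ht => ⟨fun htY s hs hlt => hind s hs t htY hlt.ne, fun h => ?_⟩⟩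
    by_contra htY
    obtain ⟨c, hc, hd⟩ := hcov t ht
    have h1 := h c hc (hprefix c hc t ht htY)
    rw [dist_comm] at h1
    exact absurd hd (not_le.mpr h1)
  · rintro M ⟨hMT, hM⟩
    have hYM : Y ⊆ M := by
      intro y hy
      refine (hM y (hYT hy)).2 fun s hs hlt => ?_
      have hsY : s ∈ Y := by
        by_contra hsY
        exact lt_asymm hlt (hprefix y hy s (hMT hs) hsY)
      exact hind s hsY y hy hlt.ne
    refine Finset.Subset.antisymm (fun m hm => ?_) hYM
    by_contra hmY
    obtain ⟨c, hc, hd⟩ := hcov m (hMT hm)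
    have h1 := (hM m (hMT hm)).1 hm c (hYM hc) (hprefix c hc m (hMT hm) hmY)
    rw [dist_comm] at h1
    exact absurd hd (not_le.mpr h1)
end

section
/- Let T be a finite set of points in a metric space equipped with a linear order <, let ρ ≥ 0, and let M be the greedy set for (T,<,ρ). If C ⊆ T is an initial segment of T with respect to < (i.e., whenever c ∈ C and t ∈ T with t < c, then t ∈ C), then M ∩ C is the greedy set for (C,<,ρ). In particular, all machines that run the greedy procedure with the same ordered prefix C compute the same partial solution on C. -/
/-- If `M` is the greedy set for `(T, <, ρ)` and `C ⊆ T` is an initial segment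
of `T` with respect to `<`, then `M ∩ C` is the greedy set for `(C, <, ρ)`:
all machines running the greedy procedure on the same ordered prefix `C`
compute the same partial solution. -/
theorem greedySet_restrict_initialSegment
    {X : Type*} [MetricSpace X] [LinearOrder X]
    (T M C : Finset X) (ρ : ℝ) (hρ : 0 ≤ ρ)
    (hM : IsGreedySet T M ρ)
    (hCT : C ⊆ T)
    (hinit : ∀ c ∈ C, ∀ t ∈ T, t < c → t ∈ C) :
    IsGreedySet C (M ∩ C) ρ := by
  obtain ⟨hMT, h⟩ := hM
  refine ⟨Finset.inter_subset_right, fun t ht => ?_⟩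
  rw [Finset.mem_inter, h t (hCT ht)]
  constructor
  · rintro ⟨h1, _⟩ s hs hst
    exact h1 s (Finset.mem_inter.mp hs).1 hst
  · intro h1
    exact ⟨fun s hs hst =>
      h1 s (Finset.mem_inter.mpr ⟨hs, hinit t ht s (hMT hs) hst⟩) hst, ht⟩
end

section
/- Let S be a finite nonempty set of points in a metric space, k ≥ 1, and let r* = r*(S,k) be the optimal k-center radius of S. Then there exists a value ρ belonging to the set of pairwise distances of points of S with ρ ≤ 2r*, and a subset C ⊆ S with |C| ≤ k, such that all pairwise distances between distinct points of C exceed ρ and C center-covers S with radius ρ. In particular, parametric pruning over the pairwise distances terminates at a radius ρ ≤ 2r* with at most k centers, yielding a 2-approximation for metric k-center. -/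
/-- Parametric pruning terminates at a radius `ρ` that is a pairwise distance
of points of `S`, with `ρ ≤ 2r*`, producing at most `k` centers that are
pairwise more than `ρ` apart and center-cover `S` with radius `ρ` — a
2-approximation for metric k-center. -/
theorem parametric_pruning_two_approx
    {X : Type*} [MetricSpace X] (S : Finset X) (hS : S.Nonempty)
    (k : ℕ) (hk : 1 ≤ k) (rstar : ℝ) (hopt : IsOptRadius S k rstar) :
    ∃ ρ : ℝ, (∃ p ∈ S, ∃ q ∈ S, ρ = dist p q) ∧ ρ ≤ 2 * rstar ∧
      ∃ C ⊆ S, C.card ≤ k ∧ (∀ p ∈ C, ∀ q ∈ C, p ≠ q → ρ < dist p q) ∧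
        CenterCovers C S ρ := by
  classical
  obtain ⟨⟨D, hDS, hDne, hDk, hD⟩, -⟩ := hopt
  have hr : 0 ≤ rstar := by
    obtain ⟨p, hp⟩ := hS
    obtain ⟨c, -, h⟩ := hD p hp
    exact dist_nonneg.trans h
  -- the largest pairwise distance not exceeding twice the optimum
  let T : Finset (X × X) := (S ×ˢ S).filter fun z => dist z.1 z.2 ≤ 2 * rstar
  have hT : T.Nonempty := by
    obtain ⟨p, hp⟩ := hS
    exact ⟨(p, p), by simp [T, hp, hr]⟩
  obtain ⟨z, hzT, hzmax⟩ := T.exists_max_image (fun z => dist z.1 z.2) hT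
  have hz : (z.1 ∈ S ∧ z.2 ∈ S) ∧ dist z.1 z.2 ≤ 2 * rstar := by
    simpa [T] using hzT
  have hbig : ∀ p ∈ S, ∀ q ∈ S, dist z.1 z.2 < dist p q → 2 * rstar < dist p q := by
    intro p hp q hq h
    by_contra hle
    have := hzmax (p, q) (by simp [T, hp, hq, not_lt.mp hle])
    exact absurd h (not_lt.mpr this)
  -- a largest separated subset
  let F : Finset (Finset X) := S.powerset.filter fun C =>
    ∀ p ∈ C, ∀ q ∈ C, p ≠ q → dist z.1 z.2 < dist p q
  have hF : F.Nonempty := ⟨∅, by simp [F]⟩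
  obtain ⟨C, hCF, hCmax⟩ := F.exists_max_image Finset.card hF
  have hC : C ⊆ S ∧ ∀ p ∈ C, ∀ q ∈ C, p ≠ q → dist z.1 z.2 < dist p q := by
    rw [Finset.mem_filter, Finset.mem_powerset] at hCF
    exact hCF
  obtain ⟨hCS, hCsep⟩ := hC
  refine ⟨dist z.1 z.2, ⟨z.1, hz.1.1, z.2, hz.1.2, rfl⟩, hz.2, C, hCS, ?_, hCsep, ?_⟩
  · refine le_trans ?_ hDk
    choose! f hfD hf using hD
    refine Finset.card_le_card_of_injOn f (fun p hp => hfD p (hCS hp)) ?_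
    intro p hp q hq hpq
    by_contra hne
    have h1 := hbig p (hCS hp) q (hCS hq) (hCsep p hp q hq hne)
    have h2 := hf p (hCS hp)
    have h3 := hf q (hCS hq)
    have h4 := dist_triangle_right p q (f p)
    rw [← hpq] at h3
    linarith
  · intro p hp
    by_contra hno
    push Not at hno
    have hpC : p ∉ C := by
      intro h
      have := hno p h
      rw [dist_self] at this
      exact absurd this (not_lt.mpr dist_nonneg)
    have hmem : insert p C ∈ F := by
      rw [Finset.mem_filter, Finset.mem_powerset]
      refine ⟨Finset.insert_subset hp hCS, ?_⟩
      intro a ha b hb hab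
      rcases Finset.mem_insert.mp ha with rfl | ha2
      · rcases Finset.mem_insert.mp hb with rfl | hb2
        · exact absurd rfl hab
        · exact hno b hb2
      · rcases Finset.mem_insert.mp hb with rfl | hb2
        · rw [dist_comm a b]
          exact hno a ha2
        · exact hCsep a ha2 b hb2 hab
    have := hCmax _ hmem
    rw [Finset.card_insert_of_notMem hpC] at this
    omega
end
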